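/- For all integers k ≥ 1 and q ≥ 1 and every integer s with 0 ≤ s ≤ q, the quantum transition capacity satisfies ⟦SIZE[k·s] ∖ CL → CL⟧_k ≤ 2·e·k·√(10·(q+1)/M), where e is Euler's number. -/

import Mathlib

noncomputable section

/- `Ȳ = Y ∪ {⊥}` is modeled by `Option Y` (`⊥ = none`), databases by `X → Option Y`,
and `ℂ[DB]` by `EuclideanSpace ℂ (X → Option Y)`. -/

/-- matrix (in the computational basis) of the single-register unitary `Comp` -/
def compMat (Y : Type*) [Fintype Y] [DecidableEq Y] :
    Matrix (Option Y) (Option Y) ℂ :=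
  Matrix.of fun u v =>
    match u, v with
    | none, none => 0
    | some _, none => ((Real.sqrt (Fintype.card Y) : ℝ) : ℂ)⁻¹
    | none, some _ => ((Real.sqrt (Fintype.card Y) : ℝ) : ℂ)⁻¹
    | some a, some b => (if a = b then (1 : ℂ) else 0) - ((Fintype.card Y : ℕ) : ℂ)⁻¹

/-- matrix of the diagonal unitary `O_ŷ` associated to a character `ŷ` of `Y` -/
def oMat {Y : Type*} [Fintype Y] [DecidableEq Y] [AddCommGroup Y] (c : AddChar Y ℂ) :
    Matrix (Option Y) (Option Y) ℂ :=
  Matrix.diagonal fun u => Option.elim u 1 fun r => c r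

/-- matrix of the single-register compressed oracle `cO_ŷ = Comp ∘ O_ŷ ∘ Comp` -/
def cOMat {Y : Type*} [Fintype Y] [DecidableEq Y] [AddCommGroup Y] (c : AddChar Y ℂ) :
    Matrix (Option Y) (Option Y) ℂ :=
  compMat Y * oMat c * compMat Y

/-- a single-register operator (given by its matrix `m`) acting at register `x0` -/
def liftMat {X Y : Type*} [Fintype X] [DecidableEq X] [DecidableEq Y] (x0 : X)
    (m : Matrix (Option Y) (Option Y) ℂ) :
    Matrix (X → Option Y) (X → Option Y) ℂ :=
  Matrix.of fun D' D => if ∀ a, a ≠ x0 → D' a = D a then m (D' x0) (D x0) else 0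

/-- matrix of `cO_{x,ŷ}`: the composition of `cO_{ŷ i}` acting at register `x i` -/
def cOparMat {X Y : Type*} [Fintype X] [DecidableEq X] [Fintype Y] [DecidableEq Y]
    [AddCommGroup Y] {k : ℕ} (x : Fin k → X) (c : Fin k → AddChar Y ℂ) :
    Matrix (X → Option Y) (X → Option Y) ℂ :=
  (List.ofFn fun i : Fin k => liftMat (x i) (cOMat (c i))).prod

/-- matrix of the orthogonal projection onto `span{e_D : D ∈ P}` -/
def projMat {ι : Type*} [DecidableEq ι] (P : Set ι) : Matrix ι ι ℂ := by
  classical exact Matrix.of fun i j => if i = j ∧ i ∈ P then 1 else 0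

/-- the (continuous linear) operator on `ℓ²` given by a matrix -/
def toOp {ι : Type*} [Fintype ι] [DecidableEq ι] (m : Matrix ι ι ℂ) :
    EuclideanSpace ℂ ι →L[ℂ] EuclideanSpace ℂ ι :=
  LinearMap.toContinuousLinearMap (Matrix.toEuclideanLin m)

/-- `D|^x`: the set of databases that coincide with `D` outside of `x` -/
def agreeOff {X Y : Type*} {k : ℕ} (D : X → Option Y) (x : Fin k → X) :
    Set (X → Option Y) :=
  {D' | ∀ a : X, (∀ i, x i ≠ a) → D' a = D a}

/-- The quantum transition capacity `⟦P → P' | X₀⟧_k`: the supremum, over all `x ∈ X₀^k`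
with pairwise distinct entries, all `k`-tuples `ŷ` of characters of `Y` and all databases `D`,
of `‖P'|_{D|^x} ∘ cO_{x,ŷ} ∘ P|_{D|^x}‖` (`0` if the range is empty). -/
def qtc {X Y : Type*} [Fintype X] [DecidableEq X] [Fintype Y] [DecidableEq Y]
    [AddCommGroup Y] (P P' : Set (X → Option Y)) (k : ℕ) (X₀ : Set X) : ℝ :=
  sSup {v : ℝ | ∃ (x : Fin k → X) (c : Fin k → AddChar Y ℂ) (D : X → Option Y),
    Function.Injective x ∧ (∀ i, x i ∈ X₀) ∧
    v = ‖(toOp (projMat (P' ∩ agreeOff D x))).comp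
          ((toOp (cOparMat x c)).comp (toOp (projMat (P ∩ agreeOff D x))))‖}

end

/-- `CL`: the databases containing a collision, i.e. `D x = D x' ≠ ⊥` for some `x ≠ x'` -/
def CL {X Y : Type*} : Set (X → Option Y) :=
  {D | ∃ a b : X, a ≠ b ∧ D a = D b ∧ D a ≠ none}

/-- `SIZE s`: the databases with at most `s` non-`⊥` entries -/
def SIZE {X Y : Type*} (s : ℕ) : Set (X → Option Y) :=
  {D | {a | D a ≠ none}.Finite ∧ {a | D a ≠ none}.ncard ≤ s}

/-!
Fix a database `E` of size at most `k * s` without collision. If a database agreeing with `E`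
outside the `k` queried positions has a collision, then either a queried position repeats one of
the at most `k * s` values of `E` at the other positions, or two queried positions collide. The
`k + k ^ 2` corresponding projections are diagonal, so the squared norm of the transition into `CL`
is at most the sum of the squared norms of the transitions into the single events.

For one event, the unitaries applied to the `k` registers are added one at a time: the transition
norms from its complement into it add up, and only the one or two registers that the event looks at
contribute. On such a register, with the other registers fixed, the event prescribes a set of
values `u`. The row `u` of the unitary `cO_ŷ` has norm `1` and a diagonal entry of modulus at least
`1 - 4 / M`, so the squared transition norm is at most `8 / M` for each value. In total the squared
capacity is at most `(k * (k * s) * 8 + k ^ 2 * 32) / M`.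
-/

section Leakage

open scoped Matrix.Norms.L2Operator MatrixOrder ComplexOrder

variable {ι : Type*} [DecidableEq ι]

lemma projMat_eq_diagonal (P : Set ι) : projMat P = Matrix.diagonal (P.indicator 1) := by
  classical
  ext i j
  by_cases hij : i = j <;> simp [projMat, Set.indicator, hij]

lemma projMat_empty : projMat (∅ : Set ι) = 0 := by
  simp [projMat_eq_diagonal]

lemma projMat_compl (P : Set ι) : projMat Pᶜ = 1 - projMat P := by
  simp only [projMat_eq_diagonal, Set.indicator_compl, ← Matrix.diagonal_one,
    Matrix.diagonal_sub, Pi.sub_def, Pi.one_apply]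

lemma projMat_singleton (u : ι) : projMat {u} = Matrix.single u u 1 := by
  rw [projMat_eq_diagonal, ← Matrix.diagonal_single, Set.indicator_singleton, Pi.one_apply]

lemma projMat_le_sum {κ : Type*} [Fintype κ] {P : Set ι} {L : κ → Set ι} (hP : P ⊆ ⋃ j, L j) :
    projMat P ≤ ∑ j, projMat (L j) := by
  have hsum : ∑ j, projMat (L j) = Matrix.diagonal (∑ j, (L j).indicator 1) := by
    simp only [projMat_eq_diagonal]
    exact (map_sum (Matrix.diagonalAddMonoidHom ι ℂ) _ _).symm
  have hnonneg (j : κ) (i : ι) : (0 : ℂ) ≤ (L j).indicator 1 i :=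
    Set.indicator_nonneg (fun _ _ => zero_le_one) i
  rw [Matrix.le_iff, hsum, projMat_eq_diagonal, Matrix.diagonal_sub,
    Matrix.posSemidef_diagonal_iff]
  intro i
  rw [sub_nonneg, Finset.sum_apply]
  refine Set.indicator_le' (fun i hi => ?_) (fun i _ => Finset.sum_nonneg fun j _ => hnonneg j i) i
  obtain ⟨j, hj⟩ := Set.mem_iUnion.1 (hP hi)
  calc (1 : ℂ) = (L j).indicator 1 i := by simp [hj]
    _ ≤ ∑ j, (L j).indicator 1 i :=
      Finset.single_le_sum (fun j _ => hnonneg j i) (Finset.mem_univ j)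

variable [Fintype ι]

lemma projMat_mul_projMat (P Q : Set ι) : projMat P * projMat Q = projMat (P ∩ Q) := by
  simp only [projMat_eq_diagonal, Matrix.diagonal_mul_diagonal', ← Set.inter_indicator_mul,
    one_mul, Pi.one_def]

lemma isStarProjection_projMat (P : Set ι) : IsStarProjection (projMat P) where
  isIdempotentElem := by rw [IsIdempotentElem, projMat_mul_projMat, Set.inter_self]
  isSelfAdjoint := by
    rw [projMat_eq_diagonal, IsSelfAdjoint, Matrix.star_eq_conjTranspose,
      Matrix.diagonal_conjTranspose]
    congr 1
    ext i
    by_cases hi : i ∈ P <;> simp [hi]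

lemma norm_projMat_le_one (P : Set ι) : ‖projMat P‖ ≤ 1 :=
  (isStarProjection_projMat P).norm_le

lemma norm_toOp_comp_comp (A B C : Matrix ι ι ℂ) :
    ‖(toOp A).comp ((toOp B).comp (toOp C))‖ = ‖A * B * C‖ := by
  rw [Matrix.cstar_norm_def, mul_assoc, map_mul, map_mul]
  rfl

/-- The leakage of `A` into `P`: the norm of the block of `A` that maps the span of the basis
vectors outside `P` to the span of those inside `P`. -/
noncomputable def leakage (P : Set ι) (A : Matrix ι ι ℂ) : ℝ :=
  ‖projMat P * A * projMat Pᶜ‖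

lemma leakage_nonneg (P : Set ι) (A : Matrix ι ι ℂ) : 0 ≤ leakage P A := norm_nonneg _

lemma leakage_empty (A : Matrix ι ι ℂ) : leakage ∅ A = 0 := by
  simp [leakage, projMat_empty]

lemma leakage_univ (A : Matrix ι ι ℂ) : leakage Set.univ A = 0 := by
  simp [leakage, projMat_empty]

lemma norm_projMat_mul_sq (P : Set ι) (A : Matrix ι ι ℂ) :
    ‖projMat P * A‖ ^ 2 = ‖star A * projMat P * A‖ := by
  have hP := isStarProjection_projMat P
  rw [sq, ← CStarRing.norm_star_mul_self, star_mul, hP.isSelfAdjoint.star_eq, mul_assoc,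
    ← mul_assoc (projMat P), hP.isIdempotentElem.eq, mul_assoc]

lemma norm_projMat_mul_sq_le_sum {κ : Type*} [Fintype κ] {P : Set ι} {L : κ → Set ι}
    (hP : P ⊆ ⋃ j, L j) (A : Matrix ι ι ℂ) :
    ‖projMat P * A‖ ^ 2 ≤ ∑ j, ‖projMat (L j) * A‖ ^ 2 := by
  simp only [norm_projMat_mul_sq]
  calc ‖star A * projMat P * A‖
      ≤ ‖∑ j, star A * projMat (L j) * A‖ := by
        refine CStarAlgebra.norm_le_norm_of_nonneg_of_le
          (star_left_conjugate_nonneg (isStarProjection_projMat P).nonneg A) ?_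
        rw [← Finset.sum_mul, ← Finset.mul_sum]
        exact star_left_conjugate_le_conjugate (projMat_le_sum hP) A
    _ ≤ ∑ j, ‖star A * projMat (L j) * A‖ := norm_sum_le _ _

lemma norm_projMat_mul_mul_projMat_sq_le_sum_leakage {κ : Type*} [Fintype κ] {P P' : Set ι}
    {L : κ → Set ι} (hP : ∀ j, P ⊆ (L j)ᶜ) (hP' : P' ⊆ ⋃ j, L j) (A : Matrix ι ι ℂ) :
    ‖projMat P' * A * projMat P‖ ^ 2 ≤ ∑ j, leakage (L j) A ^ 2 := by
  rw [mul_assoc]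
  refine (norm_projMat_mul_sq_le_sum hP' _).trans (Finset.sum_le_sum fun j _ => ?_)
  refine pow_le_pow_left₀ (norm_nonneg _) ?_ 2
  calc ‖projMat (L j) * (A * projMat P)‖
      = ‖projMat (L j) * A * projMat (L j)ᶜ * projMat P‖ := by
        rw [mul_assoc _ (projMat _), projMat_mul_projMat, Set.inter_eq_right.2 (hP j), mul_assoc]
    _ ≤ leakage (L j) A * ‖projMat P‖ := norm_mul_le _ _
    _ ≤ leakage (L j) A :=
        mul_le_of_le_one_right (leakage_nonneg _ _) (norm_projMat_le_one P)

lemma leakage_mul_le (P : Set ι) {U V : Matrix ι ι ℂ} (hU : U ∈ Matrix.unitaryGroup ι ℂ)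
    (hV : V ∈ Matrix.unitaryGroup ι ℂ) :
    leakage P (U * V) ≤ leakage P U + leakage P V := by
  have hsplit : projMat P * (U * V) * projMat Pᶜ =
      projMat P * U * projMat Pᶜ * (V * projMat Pᶜ)
        + projMat P * U * (projMat P * V * projMat Pᶜ) := by
    have hPP := (isStarProjection_projMat Pᶜ).isIdempotentElem.eq
    rw [projMat_compl] at *
    noncomm_ring
  rw [leakage, hsplit]
  refine (norm_add_le _ _).trans (add_le_add ?_ ?_)
  · calc _ ≤ leakage P U * ‖V * projMat Pᶜ‖ := norm_mul_le _ _
      _ ≤ leakage P U := by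
        rw [CStarRing.norm_mem_unitary_mul _ hV]
        exact mul_le_of_le_one_right (leakage_nonneg _ _) (norm_projMat_le_one _)
  · calc _ ≤ ‖projMat P * U‖ * leakage P V := norm_mul_le _ _
      _ ≤ leakage P V := by
        rw [CStarRing.norm_mul_mem_unitary _ hU]
        exact mul_le_of_le_one_left (leakage_nonneg _ _) (norm_projMat_le_one _)

lemma leakage_list_prod_le (P : Set ι) {l : List (Matrix ι ι ℂ)}
    (hl : ∀ U ∈ l, U ∈ Matrix.unitaryGroup ι ℂ) :
    leakage P l.prod ≤ (l.map (leakage P)).sum := by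
  induction l with
  | nil => simp [leakage, projMat_mul_projMat, projMat_empty]
  | cons U l ih =>
    rw [List.forall_mem_cons] at hl
    rw [List.prod_cons, List.map_cons, List.sum_cons]
    exact (leakage_mul_le P hl.1 (list_prod_mem hl.2)).trans (by grw [ih hl.2])

lemma leakage_singleton_sq (u : ι) {U : Matrix ι ι ℂ} (hU : U ∈ Matrix.unitaryGroup ι ℂ) :
    leakage {u} U ^ 2 = 1 - ‖U u u‖ ^ 2 := by
  have hQ := isStarProjection_projMat ({u}ᶜ : Set ι)
  have hblock : projMat {u} * U * projMat {u}ᶜ * star (projMat {u} * U * projMat {u}ᶜ) =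
      Matrix.diagonal (Pi.single u ((1 - ‖U u u‖ ^ 2 : ℝ) : ℂ)) := by
    calc _ = projMat {u} * U * (projMat {u}ᶜ * projMat {u}ᶜ) * (star U * projMat {u}) := by
          simp only [star_mul, hQ.isSelfAdjoint.star_eq,
            (isStarProjection_projMat {u}).isSelfAdjoint.star_eq, mul_assoc]
      _ = projMat {u} * (U * star U) * projMat {u}
            - projMat {u} * U * projMat {u} * (star U * projMat {u}) := by
          rw [hQ.isIdempotentElem.eq, projMat_compl]
          noncomm_ring
      _ = _ := by
          rw [Matrix.mem_unitaryGroup_iff.1 hU, projMat_singleton]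
          simp only [← mul_assoc, mul_one, Matrix.single_mul_mul_single,
            Matrix.single_mul_single_same, Matrix.diagonal_single,
            Matrix.star_apply, one_mul, Complex.star_def, Complex.mul_conj']
          push_cast
          exact (map_sub (Matrix.singleAddMonoidHom (α := ℂ) u u) _ _).symm
  rw [leakage, sq, ← CStarRing.norm_self_mul_star, hblock, Matrix.l2_opNorm_diagonal,
    Pi.norm_single, Complex.norm_real, Real.norm_of_nonneg]
  exact sub_nonneg.2 (pow_le_one₀ (norm_nonneg _) (entry_norm_bound_of_unitary hU u u))

lemma leakage_finset_sq_le (S : Finset ι) {U : Matrix ι ι ℂ}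
    (hU : U ∈ Matrix.unitaryGroup ι ℂ) :
    leakage (S : Set ι) U ^ 2 ≤ ∑ u ∈ S, (1 - ‖U u u‖ ^ 2) := by
  simp only [← leakage_singleton_sq _ hU]
  rw [← Finset.sum_coe_sort]
  refine norm_projMat_mul_mul_projMat_sq_le_sum_leakage (L := fun u : S => {(u : ι)})
    (fun u => ?_) ?_ U
  · simp
  · simp

end Leakage

section Registers

open scoped Matrix.Norms.L2Operator

variable {X V : Type*} [DecidableEq X] [DecidableEq V]

/-- The operator that applies the matrix `B R` to register `x` when the other registers contain
`R`, as a star homomorphism in the family `B`. -/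
def controlled [Fintype X] [Fintype V] (x : X) :
    (({a // a ≠ x} → V) → Matrix V V ℂ) →⋆ₐ[ℂ] Matrix (X → V) (X → V) ℂ where
  toFun B := (Matrix.blockDiagonal B).submatrix (Equiv.funSplitAt x V) (Equiv.funSplitAt x V)
  map_one' := by rw [Matrix.blockDiagonal_one, Matrix.submatrix_one_equiv]
  map_mul' A B := by
    rw [Pi.mul_def, Matrix.blockDiagonal_mul, Matrix.submatrix_mul_equiv]
  map_zero' := by rw [Matrix.blockDiagonal_zero]; rfl
  map_add' A B := by rw [Matrix.blockDiagonal_add, Matrix.submatrix_add]; rfl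
  commutes' r := by
    simp only [Algebra.algebraMap_eq_smul_one, Matrix.blockDiagonal_smul,
      Matrix.blockDiagonal_one, Matrix.submatrix_smul, Matrix.submatrix_one_equiv, Pi.smul_apply]
  map_star' B := by
    simp only [Matrix.star_eq_conjTranspose, Matrix.conjTranspose_submatrix,
      Matrix.blockDiagonal_conjTranspose]
    rfl

/-- The slice of `P` along register `x`: the values at `x` that, together with the contents `R`
of the other registers, form an element of `P`. -/
def slice (x : X) (P : Set (X → V)) (R : {a // a ≠ x} → V) : Set V :=
  {v | (Equiv.funSplitAt x V).symm (v, R) ∈ P}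

variable [Fintype X] [Fintype V]

lemma controlled_apply (x : X) (B : ({a // a ≠ x} → V) → Matrix V V ℂ) (D E : X → V) :
    controlled x B D E =
      if (fun a : {a // a ≠ x} => D a) = (fun a : {a // a ≠ x} => E a) then
        B (fun a => D a) (D x) (E x) else 0 := rfl

lemma projMat_eq_controlled (x : X) (P : Set (X → V)) :
    projMat P = controlled x fun R => projMat (slice x P R) := by
  ext D E
  have hmem : D x ∈ slice x P (fun a => D a) ↔ D ∈ P :=
    iff_of_eq (congrArg (· ∈ P) ((Equiv.funSplitAt x V).symm_apply_apply D))
  have hDE : D = E ↔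
      (fun a : {a // a ≠ x} => D a) = (fun a : {a // a ≠ x} => E a) ∧ D x = E x := by
    rw [← (Equiv.funSplitAt x V).injective.eq_iff, and_comm]
    exact Prod.ext_iff
  rw [controlled_apply]
  simp only [projMat, Matrix.of_apply]
  split_ifs <;> first | rfl | tauto

lemma liftMat_eq_controlled {Y : Type*} [Fintype Y] [DecidableEq Y] (x : X)
    (m : Matrix (Option Y) (Option Y) ℂ) : liftMat x m = controlled x fun _ => m := by
  ext D E
  simp [liftMat, controlled_apply, funext_iff]

lemma norm_controlled_le (x : X) (B : ({a // a ≠ x} → V) → Matrix V V ℂ) {r : ℝ} (hr : 0 ≤ r)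
    (hB : ∀ R, ‖B R‖ ≤ r) : ‖controlled x B‖ ≤ r :=
  (NonUnitalStarAlgHom.norm_apply_le (controlled x) B).trans ((pi_norm_le_iff_of_nonneg hr).2 hB)

lemma liftMat_mem_unitaryGroup {Y : Type*} [Fintype Y] [DecidableEq Y] (x : X)
    {m : Matrix (Option Y) (Option Y) ℂ} (hm : m ∈ Matrix.unitaryGroup (Option Y) ℂ) :
    liftMat x m ∈ Matrix.unitaryGroup (X → Option Y) ℂ := by
  rw [liftMat_eq_controlled]
  exact Unitary.map_mem (controlled x) (Unitary.mem_iff.2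
    ⟨funext fun _ => (Unitary.mem_iff.1 hm).1, funext fun _ => (Unitary.mem_iff.1 hm).2⟩)

lemma leakage_liftMat_le {Y : Type*} [Fintype Y] [DecidableEq Y] (x : X)
    (P : Set (X → Option Y)) (m : Matrix (Option Y) (Option Y) ℂ) {r : ℝ} (hr : 0 ≤ r)
    (h : ∀ R, leakage (slice x P R) m ≤ r) : leakage P (liftMat x m) ≤ r := by
  rw [leakage, projMat_eq_controlled x P, projMat_eq_controlled x Pᶜ, liftMat_eq_controlled,
    ← map_mul, ← map_mul]
  exact norm_controlled_le x _ hr h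

end Registers

section Oracle

variable {Y : Type*} [Fintype Y]

lemma inv_sqrt_card_mul_self :
    ((√(Fintype.card Y) : ℝ) : ℂ)⁻¹ * ((√(Fintype.card Y) : ℝ) : ℂ)⁻¹ =
      ((Fintype.card Y : ℕ) : ℂ)⁻¹ := by
  rw [← mul_inv, ← Complex.ofReal_mul, Real.mul_self_sqrt (Nat.cast_nonneg _),
    Complex.ofReal_natCast]

variable [DecidableEq Y]

lemma compMat_conjTranspose : (compMat Y).conjTranspose = compMat Y := by
  ext u v
  rcases u with _ | u <;> rcases v with _ | v <;>
    simp [compMat, Matrix.conjTranspose_apply, apply_ite, eq_comm]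

lemma compMat_mul_self [Nonempty Y] : compMat Y * compMat Y = 1 := by
  have hM : ((Fintype.card Y : ℕ) : ℂ) ≠ 0 := Nat.cast_ne_zero.2 Fintype.card_ne_zero
  ext u v
  rw [Matrix.mul_apply, Fintype.sum_option]
  rcases u with _ | u <;> rcases v with _ | v <;> simp only [compMat, Matrix.of_apply]
  · simp [inv_sqrt_card_mul_self, hM]
  · simp [← Finset.mul_sum, Finset.sum_sub_distrib, hM]
  · simp [← Finset.sum_mul, Finset.sum_sub_distrib, hM]
  · simp [inv_sqrt_card_mul_self, sub_mul, mul_sub, Finset.sum_sub_distrib, Matrix.one_apply, hM]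

lemma compMat_mem_unitaryGroup [Nonempty Y] : compMat Y ∈ Matrix.unitaryGroup (Option Y) ℂ := by
  rw [Matrix.mem_unitaryGroup_iff', Matrix.star_eq_conjTranspose, compMat_conjTranspose,
    compMat_mul_self]

variable [AddCommGroup Y] (c : AddChar Y ℂ)

lemma oMat_mem_unitaryGroup : oMat c ∈ Matrix.unitaryGroup (Option Y) ℂ := by
  rw [Matrix.mem_unitaryGroup_iff', Matrix.star_eq_conjTranspose, oMat,
    Matrix.diagonal_conjTranspose, Matrix.diagonal_mul_diagonal, ← Matrix.diagonal_one]
  congr 1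
  ext u
  rcases u with _ | u
  · simp
  · simp [Complex.conj_mul', AddChar.norm_apply]

lemma cOMat_mem_unitaryGroup : cOMat c ∈ Matrix.unitaryGroup (Option Y) ℂ :=
  mul_mem (mul_mem compMat_mem_unitaryGroup (oMat_mem_unitaryGroup c)) compMat_mem_unitaryGroup

lemma cOMat_some_self (u : Y) :
    cOMat c (some u) (some u) = c u + ((Fintype.card Y : ℂ)⁻¹
      - 2 * (Fintype.card Y : ℂ)⁻¹ * c u + (Fintype.card Y : ℂ)⁻¹ ^ 2 * ∑ w, c w) := by
  have hterm (w : Y) :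
      ((if u = w then (1 : ℂ) else 0) - (Fintype.card Y : ℂ)⁻¹) * c w *
          ((if w = u then (1 : ℂ) else 0) - (Fintype.card Y : ℂ)⁻¹) =
        (if u = w then (1 - 2 * (Fintype.card Y : ℂ)⁻¹) * c w else 0)
          + (Fintype.card Y : ℂ)⁻¹ ^ 2 * c w := by
    by_cases h : u = w
    · simp only [h, if_true]
      ring
    · simp only [h, Ne.symm h, if_false]
      ring
  rw [cOMat, oMat, Matrix.mul_apply, Fintype.sum_option]
  simp only [Matrix.mul_diagonal, compMat, Matrix.of_apply, Option.elim, mul_one,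
    inv_sqrt_card_mul_self, hterm, Finset.sum_add_distrib, Finset.sum_ite_eq, Finset.mem_univ,
    if_true, ← Finset.mul_sum]
  ring

lemma one_sub_le_norm_cOMat_some_self (u : Y) :
    1 - 4 / (Fintype.card Y : ℝ) ≤ ‖cOMat c (some u) (some u)‖ := by
  have hsum : ‖∑ w, c w‖ ≤ Fintype.card Y :=
    (norm_sum_le _ _).trans_eq (by simp [AddChar.norm_apply])
  have hrest : ‖(Fintype.card Y : ℂ)⁻¹ - 2 * (Fintype.card Y : ℂ)⁻¹ * c u
      + (Fintype.card Y : ℂ)⁻¹ ^ 2 * ∑ w, c w‖ ≤ 4 / Fintype.card Y := by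
    calc _ ≤ ‖(Fintype.card Y : ℂ)⁻¹‖ + ‖2 * (Fintype.card Y : ℂ)⁻¹ * c u‖
            + ‖(Fintype.card Y : ℂ)⁻¹ ^ 2 * ∑ w, c w‖ :=
          (norm_add_le _ _).trans (by gcongr; exact norm_sub_le _ _)
      _ = (Fintype.card Y : ℝ)⁻¹ + 2 * (Fintype.card Y : ℝ)⁻¹
            + (Fintype.card Y : ℝ)⁻¹ ^ 2 * ‖∑ w, c w‖ := by
          simp only [norm_mul, norm_pow, norm_inv, Complex.norm_natCast, Complex.norm_ofNat,
            AddChar.norm_apply, mul_one]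
      _ ≤ (Fintype.card Y : ℝ)⁻¹ + 2 * (Fintype.card Y : ℝ)⁻¹
            + (Fintype.card Y : ℝ)⁻¹ ^ 2 * Fintype.card Y := by gcongr
      _ = 4 / Fintype.card Y := by field_simp; norm_num
  rw [cOMat_some_self]
  refine le_trans ?_ (norm_sub_le_norm_add _ _)
  rw [AddChar.norm_apply]
  exact sub_le_sub_left hrest 1

lemma one_sub_norm_cOMat_some_self_sq_le (u : Y) :
    1 - ‖cOMat c (some u) (some u)‖ ^ 2 ≤ 8 / Fintype.card Y := by
  calc 1 - ‖cOMat c (some u) (some u)‖ ^ 2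
      ≤ 2 * (1 - ‖cOMat c (some u) (some u)‖) := by
        linarith [sq_nonneg (‖cOMat c (some u) (some u)‖ - 1)]
    _ ≤ 2 * (4 / Fintype.card Y) := by linarith [one_sub_le_norm_cOMat_some_self c u]
    _ = 8 / Fintype.card Y := by ring

lemma leakage_image_some_cOMat_le (S : Finset Y) :
    leakage (some '' (S : Set Y)) (cOMat c) ≤ √(S.card * (8 / Fintype.card Y)) := by
  refine Real.le_sqrt_of_sq_le ?_
  calc leakage (some '' (S : Set Y)) (cOMat c) ^ 2
      = leakage ((S.map .some : Finset (Option Y)) : Set (Option Y)) (cOMat c) ^ 2 := by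
        rw [Finset.coe_map, Function.Embedding.some_apply]
    _ ≤ ∑ u ∈ S.map .some, (1 - ‖cOMat c u u‖ ^ 2) :=
        leakage_finset_sq_le _ (cOMat_mem_unitaryGroup c)
    _ ≤ S.card * (8 / Fintype.card Y) := by
        rw [Finset.sum_map, ← nsmul_eq_mul]
        exact Finset.sum_le_card_nsmul _ _ _ fun u _ => one_sub_norm_cOMat_some_self_sq_le c u

end Oracle

section Events

variable {X Y : Type*}

/-- The databases whose value at `a` is one of the elements of `S`. -/
def valueIn (S : Finset Y) (a : X) : Set (X → Option Y) :=
  {D | D a ∈ some '' (S : Set Y)}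

/-- The databases with a collision at the two positions `a` and `b`; there is none if `a = b`. -/
def collisionAt (a b : X) : Set (X → Option Y) :=
  {D | a ≠ b ∧ D a = D b ∧ D a ≠ none}

lemma collisionAt_comm (a b : X) : collisionAt (Y := Y) a b = collisionAt b a := by
  ext D
  constructor <;> exact fun ⟨hne, heq, h⟩ => ⟨hne.symm, heq.symm, heq ▸ h⟩

variable [DecidableEq X]

lemma slice_valueIn_self (S : Finset Y) (a : X) (R : {b // b ≠ a} → Option Y) :
    slice a (valueIn S a) R = some '' (S : Set Y) := by
  ext v
  simp [slice, valueIn]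

lemma slice_valueIn_of_ne (S : Finset Y) {a z : X} (h : a ≠ z) (R : {b // b ≠ z} → Option Y) :
    slice z (valueIn S a) R = {_v | R ⟨a, h⟩ ∈ some '' (S : Set Y)} := by
  ext v
  simp [slice, valueIn, h]

lemma slice_collisionAt_left {a b : X} (h : b ≠ a) (R : {z // z ≠ a} → Option Y) :
    slice a (collisionAt a b) R = some '' ((R ⟨b, h⟩).toFinset : Set Y) := by
  ext v
  rcases v with _ | v
  · simp [slice, collisionAt]
  · simp [slice, collisionAt, h, h.symm, eq_comm]

lemma slice_collisionAt_of_ne {a b z : X} (ha : a ≠ z) (hb : b ≠ z)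
    (R : {d // d ≠ z} → Option Y) :
    slice z (collisionAt a b) R =
      {_v | a ≠ b ∧ R ⟨a, ha⟩ = R ⟨b, hb⟩ ∧ R ⟨a, ha⟩ ≠ none} := by
  ext v
  simp [slice, collisionAt, ha, hb]

end Events

lemma sum_ite_eq_le_of_injective {ι X : Type*} [Fintype ι] [DecidableEq X] {x : ι → X}
    (hx : Function.Injective x) (a : X) {r : ℝ} (hr : 0 ≤ r) :
    ∑ i, (if x i = a then r else 0) ≤ r := by
  classical
  by_cases ha : ∃ j, x j = a
  · obtain ⟨j, rfl⟩ := ha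
    simp only [hx.eq_iff, Finset.sum_ite_eq', Finset.mem_univ, if_true, le_refl]
  · push Not at ha
    simp only [ha, if_false, Finset.sum_const_zero, hr]

section Parallel

variable {X Y : Type*} [Fintype X] [DecidableEq X] [Fintype Y] [DecidableEq Y]

lemma leakage_liftMat_eq_zero (z : X) {P : Set (X → Option Y)}
    (m : Matrix (Option Y) (Option Y) ℂ) (h : ∀ R, ∃ p : Prop, slice z P R = {_v | p}) :
    leakage P (liftMat z m) = 0 := by
  refine (leakage_liftMat_le z P m le_rfl fun R => ?_).antisymm (leakage_nonneg _ _)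
  obtain ⟨p, hp⟩ := h R
  rw [hp]
  by_cases hp' : p
  · simp only [hp', Set.ofPred_true, leakage_univ, le_refl]
  · simp only [hp', Set.ofPred_false, leakage_empty, le_refl]

variable [AddCommGroup Y]

lemma leakage_valueIn_liftMat_cOMat_le (S : Finset Y) (a z : X) (c : AddChar Y ℂ) :
    leakage (valueIn S a) (liftMat z (cOMat c)) ≤
      if z = a then √(S.card * (8 / Fintype.card Y)) else 0 := by
  split_ifs with h
  · subst h
    refine leakage_liftMat_le z _ _ (Real.sqrt_nonneg _) fun R => ?_
    rw [slice_valueIn_self]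
    exact leakage_image_some_cOMat_le c S
  · exact (leakage_liftMat_eq_zero z _ fun R => ⟨_, slice_valueIn_of_ne S (Ne.symm h) R⟩).le

lemma leakage_collisionAt_liftMat_left_le {a b : X} (h : b ≠ a) (c : AddChar Y ℂ) :
    leakage (collisionAt a b) (liftMat a (cOMat c)) ≤ √(8 / Fintype.card Y) := by
  refine leakage_liftMat_le a _ _ (Real.sqrt_nonneg _) fun R => ?_
  rw [slice_collisionAt_left h]
  refine (leakage_image_some_cOMat_le c _).trans (Real.sqrt_le_sqrt ?_)
  refine mul_le_of_le_one_left (by positivity) ?_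
  cases R ⟨b, h⟩ <;> simp

lemma leakage_collisionAt_liftMat_cOMat_le {a b : X} (hab : a ≠ b) (z : X) (c : AddChar Y ℂ) :
    leakage (collisionAt a b) (liftMat z (cOMat c)) ≤
      (if z = a then √(8 / Fintype.card Y) else 0)
        + (if z = b then √(8 / Fintype.card Y) else 0) := by
  by_cases ha : z = a
  · subst ha
    rw [if_pos rfl, if_neg hab, add_zero]
    exact leakage_collisionAt_liftMat_left_le hab.symm c
  by_cases hb : z = b
  · subst hb
    rw [if_neg hab.symm, if_pos rfl, zero_add, collisionAt_comm]
    exact leakage_collisionAt_liftMat_left_le hab c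
  · rw [if_neg ha, if_neg hb, add_zero]
    exact (leakage_liftMat_eq_zero z _ fun R =>
      ⟨_, slice_collisionAt_of_ne (Ne.symm ha) (Ne.symm hb) R⟩).le

lemma leakage_cOparMat_le {k : ℕ} (P : Set (X → Option Y)) (x : Fin k → X)
    (c : Fin k → AddChar Y ℂ) :
    leakage P (cOparMat x c) ≤ ∑ i, leakage P (liftMat (x i) (cOMat (c i))) := by
  refine (leakage_list_prod_le P fun U hU => ?_).trans_eq ?_
  · obtain ⟨i, rfl⟩ := List.mem_ofFn.1 hU
    exact liftMat_mem_unitaryGroup (x i) (cOMat_mem_unitaryGroup (c i))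
  · rw [List.map_ofFn, List.sum_ofFn]
    rfl

variable {k : ℕ} {x : Fin k → X}

lemma leakage_valueIn_cOparMat_sq_le (hx : Function.Injective x) (c : Fin k → AddChar Y ℂ)
    (S : Finset Y) (a : X) :
    leakage (valueIn S a) (cOparMat x c) ^ 2 ≤ S.card * (8 / Fintype.card Y) := by
  refine (Real.le_sqrt (leakage_nonneg _ _) (by positivity)).1 ?_
  calc _ ≤ _ := leakage_cOparMat_le _ x c
    _ ≤ _ := Finset.sum_le_sum fun i _ => leakage_valueIn_liftMat_cOMat_le S a (x i) (c i)
    _ ≤ _ := sum_ite_eq_le_of_injective hx a (Real.sqrt_nonneg _)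

lemma leakage_collisionAt_cOparMat_sq_le (hx : Function.Injective x) (c : Fin k → AddChar Y ℂ)
    (a b : X) : leakage (collisionAt a b) (cOparMat x c) ^ 2 ≤ 32 / Fintype.card Y := by
  rcases eq_or_ne a b with rfl | hab
  · have hempty : collisionAt (Y := Y) a a = ∅ := by simp [collisionAt]
    rw [hempty, leakage_empty, sq, zero_mul]
    positivity
  have hle : leakage (collisionAt a b) (cOparMat x c) ≤ 2 * √(8 / Fintype.card Y) := by
    calc _ ≤ _ := leakage_cOparMat_le _ x c
      _ ≤ _ := Finset.sum_le_sum fun i _ =>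
        leakage_collisionAt_liftMat_cOMat_le hab (x i) (c i)
      _ ≤ _ := by
        rw [Finset.sum_add_distrib, two_mul]
        exact add_le_add (sum_ite_eq_le_of_injective hx a (Real.sqrt_nonneg _))
          (sum_ite_eq_le_of_injective hx b (Real.sqrt_nonneg _))
  calc _ ≤ _ := pow_le_pow_left₀ (leakage_nonneg _ _) hle 2
    _ = 32 / Fintype.card Y := by
      rw [mul_pow, Real.sq_sqrt (by positivity)]
      ring

end Parallel

section Collision

variable {X Y : Type*} {k t : ℕ}

lemma agreeOff_eq_of_mem {D E : X → Option Y} {x : Fin k → X} (hE : E ∈ agreeOff D x) :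
    agreeOff D x = agreeOff E x := by
  ext F
  exact forall₂_congr fun a ha => by rw [hE a ha]

variable [Fintype Y]

/-- The values of the database `D` at the positions that are not queried by `x`. -/
noncomputable def valuesOff (D : X → Option Y) (x : Fin k → X) : Finset Y := by
  classical exact Finset.univ.filter fun y => ∃ b, (∀ i, x i ≠ b) ∧ D b = some y

lemma mem_image_some_valuesOff {D : X → Option Y} {x : Fin k → X} {o : Option Y} :
    o ∈ some '' (valuesOff D x : Set Y) ↔ o ≠ none ∧ ∃ b, (∀ i, x i ≠ b) ∧ D b = o := by
  rcases o with _ | y <;> simp [valuesOff]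

lemma card_valuesOff_le {D : X → Option Y} (hD : D ∈ SIZE t) (x : Fin k → X) :
    (valuesOff D x).card ≤ t := by
  refine le_trans ?_ hD.2
  rw [← Set.ncard_coe_finset, ← Set.ncard_image_of_injective _ (Option.some_injective Y)]
  refine (Set.ncard_le_ncard (t := D '' {a | D a ≠ none}) ?_ (hD.1.image D)).trans
    (Set.ncard_image_le hD.1)
  intro o ho
  obtain ⟨hne, b, -, rfl⟩ := mem_image_some_valuesOff.1 ho
  exact ⟨b, hne, rfl⟩

/-- The events that cover the databases with a collision among those agreeing with `E` off `x`:
some `x i` repeats a value that `E` has off `x`, or `x i` and `x j` collide. -/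
def collisionEvent (E : X → Option Y) (x : Fin k → X) :
    Fin k ⊕ Fin k × Fin k → Set (X → Option Y) :=
  Sum.elim (fun i => valueIn (valuesOff E x) (x i)) fun p => collisionAt (x p.1) (x p.2)

lemma CL_inter_agreeOff_subset {E : X → Option Y} (hE : E ∉ CL) (x : Fin k → X) :
    CL ∩ agreeOff E x ⊆ ⋃ j, collisionEvent E x j := by
  rintro F ⟨⟨a, b, hab, heq, hne⟩, hF⟩
  rw [Set.mem_iUnion, Sum.exists]
  by_cases ha : ∃ i, x i = a <;> by_cases hb : ∃ j, x j = b
  · obtain ⟨i, rfl⟩ := ha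
    obtain ⟨j, rfl⟩ := hb
    exact .inr ⟨(i, j), hab, heq, hne⟩
  · obtain ⟨i, rfl⟩ := ha
    push Not at hb
    exact .inl ⟨i, mem_image_some_valuesOff.2 ⟨hne, b, hb, by rw [← hF b hb, heq]⟩⟩
  · obtain ⟨j, rfl⟩ := hb
    push Not at ha
    exact .inl ⟨j, mem_image_some_valuesOff.2 ⟨heq ▸ hne, a, ha, by rw [← hF a ha, heq]⟩⟩
  · push Not at ha hb
    exact absurd ⟨a, b, hab, by rw [← hF a ha, ← hF b hb, heq], hF a ha ▸ hne⟩ hE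

lemma diff_CL_inter_agreeOff_subset (P : Set (X → Option Y)) (E : X → Option Y) (x : Fin k → X)
    (j : Fin k ⊕ Fin k × Fin k) :
    (P \ CL) ∩ agreeOff E x ⊆ (collisionEvent E x j)ᶜ := by
  rintro F ⟨⟨-, hCL⟩, hF⟩ hj
  refine hCL ?_
  rcases j with i | ⟨i, j⟩
  · obtain ⟨hne, b, hb, hEb⟩ := mem_image_some_valuesOff.1 hj
    exact ⟨x i, b, hb i, by rw [hF b hb, hEb], hne⟩
  · exact ⟨x i, x j, hj⟩

end Collision

section Capacity

open scoped Matrix.Norms.L2Operator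

variable {X Y : Type*} [Fintype X] [DecidableEq X] [Fintype Y] [DecidableEq Y] [AddCommGroup Y]
  {k : ℕ} {x : Fin k → X}

lemma sum_leakage_collisionEvent_sq_le (hx : Function.Injective x) (c : Fin k → AddChar Y ℂ)
    {t : ℕ} {E : X → Option Y} (hE : E ∈ SIZE t) :
    ∑ j, leakage (collisionEvent E x j) (cOparMat x c) ^ 2 ≤
      8 * (k * t + 4 * k ^ 2) / Fintype.card Y := by
  have hcard : ((valuesOff E x).card : ℝ) ≤ t := by exact_mod_cast card_valuesOff_le hE x
  rw [Fintype.sum_sum_type]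
  calc _ ≤ ∑ _i : Fin k, (t : ℝ) * (8 / Fintype.card Y)
        + ∑ _p : Fin k × Fin k, 32 / (Fintype.card Y : ℝ) := by
        refine add_le_add (Finset.sum_le_sum fun i _ => ?_) (Finset.sum_le_sum fun p _ => ?_)
        · exact (leakage_valueIn_cOparMat_sq_le hx c _ (x i)).trans (by gcongr)
        · exact leakage_collisionAt_cOparMat_sq_le hx c (x p.1) (x p.2)
    _ = 8 * (k * t + 4 * k ^ 2) / Fintype.card Y := by
        simp only [Finset.sum_const, Finset.card_univ, Fintype.card_prod, Fintype.card_fin,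
          nsmul_eq_mul, Nat.cast_mul]
        ring

lemma norm_projMat_CL_mul_cOparMat_mul_projMat_le (hx : Function.Injective x)
    (c : Fin k → AddChar Y ℂ) (t : ℕ) (D : X → Option Y) :
    ‖projMat (CL ∩ agreeOff D x) * cOparMat x c * projMat ((SIZE t \ CL) ∩ agreeOff D x)‖ ≤
      √(8 * (k * t + 4 * k ^ 2) / Fintype.card Y) := by
  rcases ((SIZE t \ CL) ∩ agreeOff D x).eq_empty_or_nonempty with hempty | ⟨E, hE, hED⟩
  · rw [hempty, projMat_empty, mul_zero, norm_zero]
    exact Real.sqrt_nonneg _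
  · rw [agreeOff_eq_of_mem hED]
    refine Real.le_sqrt_of_sq_le (le_trans ?_ (sum_leakage_collisionEvent_sq_le hx c hE.1))
    exact norm_projMat_mul_mul_projMat_sq_le_sum_leakage
      (diff_CL_inter_agreeOff_subset (SIZE t) E x) (CL_inter_agreeOff_subset hE.2 x) _

lemma qtc_SIZE_diff_CL_le (t k : ℕ) (X₀ : Set X) :
    qtc (Y := Y) (SIZE t \ CL) CL k X₀ ≤ √(8 * (k * t + 4 * k ^ 2) / Fintype.card Y) := by
  refine Real.sSup_le ?_ (Real.sqrt_nonneg _)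
  rintro _ ⟨x, c, D, hx, -, rfl⟩
  rw [norm_toOp_comp_comp]
  exact norm_projMat_CL_mul_cOparMat_mul_projMat_le hx c t D

end Capacity

theorem stmt_15 {X Y : Type*} [Fintype X] [DecidableEq X] [Nonempty X]
    [Fintype Y] [DecidableEq Y] [AddCommGroup Y]
    (k q s : ℕ) (hk : 1 ≤ k) (hq : 1 ≤ q) (hs : s ≤ q) :
    qtc (X := X) (Y := Y) (SIZE (k * s) \ CL) CL k Set.univ
      ≤ 2 * Real.exp 1 * k * Real.sqrt (10 * (q + 1) / Fintype.card Y) := by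
  have hsq : (8 : ℝ) * (s + 4) ≤ 40 * (q + 1) := by
    have : (s : ℝ) ≤ q := Nat.cast_le.2 hs
    linarith
  calc qtc (X := X) (Y := Y) (SIZE (k * s) \ CL) CL k Set.univ
      ≤ √(8 * (k * (k * s : ℕ) + 4 * k ^ 2) / Fintype.card Y) := qtc_SIZE_diff_CL_le _ _ _
    _ ≤ √((2 * k) ^ 2 * (10 * (q + 1) / Fintype.card Y)) := by
      rw [← mul_div_assoc]
      gcongr √(?_ / _)
      push_cast
      linarith [mul_le_mul_of_nonneg_left hsq (sq_nonneg (k : ℝ))]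
    _ = 2 * 1 * k * √(10 * (q + 1) / Fintype.card Y) := by
      rw [Real.sqrt_mul (sq_nonneg _), Real.sqrt_sq (by positivity), mul_one]
    _ ≤ 2 * Real.exp 1 * k * √(10 * (q + 1) / Fintype.card Y) := by
      gcongr
      exact Real.one_le_exp zero_le_one
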